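/- arXiv:1410.2229 — 3 statements merged into one kernel-verified Lean document; each statement's English description precedes it below -/
import Mathlib

section
/- Let L ≥ 1 be a natural number, t > 0 a real number, and W : {1,…,L} → ℝ with W_i ≥ 0 for all i. Let ψ : {0,1,…,L+1} → ℝ satisfy ψ_0 = ψ_{L+1} = 0 and the eigenvalue equation -t(ψ_{j+1} + ψ_{j-1} - 2ψ_j) + W_j ψ_j = λ ψ_j for every j = 1,…,L, with ψ not identically zero, and let u : {0,1,…,L+1} → ℝ satisfy u_0 = u_{L+1} = 0 and -t(u_{j+1} + u_{j-1} - 2u_j) + W_j u_j = 1 for every j = 1,…,L. Then for all j = 1,…,L, |ψ_j| / max_{1≤k≤L} |ψ_k| ≤ λ u_j. -/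
/-!
At a nonnegative maximum of `f` over the domain, `H f` is at least the potential times `f`. Hence
the landscape function is positive: `H u ≤ 0` at a nonpositive minimum of `u`. Now let `m` maximize
`|f| / u`, say with `f m ≥ 0`, and put `r = f m / u m`. The function `f - r u` attains its maximum
`0` at `m`, so `(H f) m ≥ r (H u) m = r`, and therefore `|f| ≤ |(H f) m| u` on the whole domain. If
`H ψ = λ ψ` with `ψ ≠ 0`, then `(H ψ) m` has the sign of `ψ m`, so `λ ≥ 0` and `|ψ| ≤ λ |ψ m| u`.
-/

section CommRing

variable {V R : Type*} [CommRing R]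

/-- The Schrödinger operator `(H f) i = ∑ j ∈ N i, w i j * (f i - f j) + W i * f i` of a locally
finite weighted graph with neighborhoods `N`, hopping amplitudes `w` and potential `W`; neither
`N` nor `w` has to be symmetric. -/
def graphSchrodinger (N : V → Finset V) (w : V → V → R) (W : V → R) : (V → R) →ₗ[R] (V → R) :=
  LinearMap.pi fun i =>
    let ev (j : V) : (V → R) →ₗ[R] R := LinearMap.proj j
    ∑ j ∈ N i, w i j • (ev i - ev j) + W i • ev i

theorem graphSchrodinger_apply (N : V → Finset V) (w : V → V → R) (W f : V → R) (i : V) :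
    graphSchrodinger N w W f i = ∑ j ∈ N i, w i j * (f i - f j) + W i * f i := by
  simp [graphSchrodinger]

variable (R) in
/-- The functions satisfying Dirichlet conditions on the outer boundary of `S`, that is, on the
neighbors of points of `S` lying outside `S`. Values farther away are unconstrained, since
`graphSchrodinger` does not see them from `S`. -/
def dirichletSubspace (S : Finset V) (N : V → Finset V) : Submodule R (V → R) where
  carrier := {f | ∀ i ∈ S, ∀ j ∈ N i, j ∉ S → f j = 0}
  zero_mem' := by simp
  add_mem' hf hg i hi j hj hjS := by simp [hf i hi j hj hjS, hg i hi j hj hjS]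
  smul_mem' c f hf i hi j hj hjS := by simp [hf i hi j hj hjS]

/-- The neighborhoods of the path graph on `ℕ`. Since `0 - 1 = 0`, the site `0` is listed among
its own neighbors, which contributes nothing to `graphSchrodinger`. -/
def pathNeighbors (i : ℕ) : Finset ℕ := {i + 1, i - 1}

theorem graphSchrodinger_pathNeighbors_apply (t : R) (W f : ℕ → R) (i : ℕ) :
    graphSchrodinger pathNeighbors (fun _ _ => t) W f i =
      -t * (f (i + 1) + f (i - 1) - 2 * f i) + W i * f i := by
  rw [graphSchrodinger_apply, pathNeighbors, Finset.sum_pair (by omega)]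
  ring

theorem mem_dirichletSubspace_Icc {L : ℕ} {f : ℕ → R} (h0 : f 0 = 0) (hL : f (L + 1) = 0) :
    f ∈ dirichletSubspace R (Finset.Icc 1 L) pathNeighbors := by
  intro i hi j hj hjS
  have hj : j = 0 ∨ j = L + 1 := by
    simp only [pathNeighbors, Finset.mem_insert, Finset.mem_singleton, Finset.mem_Icc] at hi hj hjS
    omega
  rcases hj with rfl | rfl <;> assumption

end CommRing

section OrderedRing

variable {V R : Type*} [CommRing R] {S : Finset V} {N : V → Finset V} {w : V → V → R}
  {W f u : V → R}

theorem potential_mul_le_graphSchrodinger_of_isMaxOn [PartialOrder R] [IsOrderedRing R]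
    (hw : ∀ i ∈ S, ∀ j ∈ N i, 0 ≤ w i j) (hf : f ∈ dirichletSubspace R S N) {m : V} (hm : m ∈ S)
    (hmax : IsMaxOn f S m) (hfm : 0 ≤ f m) : W m * f m ≤ graphSchrodinger N w W f m := by
  rw [graphSchrodinger_apply, le_add_iff_nonneg_left]
  refine Finset.sum_nonneg fun j hj => mul_nonneg (hw m hm j hj) (sub_nonneg.2 ?_)
  by_cases hjS : j ∈ S
  · exact hmax hjS
  · exact (hf m hm j hj hjS).trans_le hfm

theorem pos_of_graphSchrodinger_pos [LinearOrder R] [IsOrderedRing R]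
    (hw : ∀ i ∈ S, ∀ j ∈ N i, 0 ≤ w i j) (hW : ∀ i ∈ S, 0 ≤ W i)
    (hu : u ∈ dirichletSubspace R S N) (hpos : ∀ i ∈ S, 0 < graphSchrodinger N w W u i) :
    ∀ i ∈ S, 0 < u i := by
  intro i hi
  obtain ⟨m, hm, hmin⟩ := S.exists_min_image u ⟨i, hi⟩
  suffices 0 < u m from this.trans_le (hmin i hi)
  by_contra! hum
  have hle : W m * -u m ≤ -graphSchrodinger N w W u m := by
    simpa using potential_mul_le_graphSchrodinger_of_isMaxOn (W := W) hw (neg_mem hu) hm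
      (fun j hj => neg_le_neg (hmin j hj)) (neg_nonneg.2 hum)
  have hnonneg : 0 ≤ -graphSchrodinger N w W u m :=
    (mul_nonneg (hW m hm) (neg_nonneg.2 hum)).trans hle
  exact (hpos m hm).not_ge (neg_nonneg.1 hnonneg)

end OrderedRing

section OrderedField

variable {V 𝕜 : Type*} [Field 𝕜] [LinearOrder 𝕜] [IsStrictOrderedRing 𝕜]
  {S : Finset V} {N : V → Finset V} {w : V → V → 𝕜} {W f u ψ : V → 𝕜}

theorem div_le_graphSchrodinger_of_forall_le_div_mul (hw : ∀ i ∈ S, ∀ j ∈ N i, 0 ≤ w i j)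
    (hf : f ∈ dirichletSubspace 𝕜 S N) (hu : u ∈ dirichletSubspace 𝕜 S N) {m : V} (hm : m ∈ S)
    (hum : u m ≠ 0) (hland : graphSchrodinger N w W u m = 1)
    (hmax : ∀ j ∈ S, f j ≤ f m / u m * u j) : f m / u m ≤ graphSchrodinger N w W f m := by
  set r := f m / u m
  have hzero : (f - r • u) m = 0 := by simp [r, hum]
  have hle : IsMaxOn (f - r • u) S m := fun j hj => by simpa [hzero] using hmax j hj
  simpa [hzero, hland] using potential_mul_le_graphSchrodinger_of_isMaxOn (W := W) hw
    (sub_mem hf ((dirichletSubspace 𝕜 S N).smul_mem r hu)) hm hle hzero.ge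

theorem exists_abs_le_abs_graphSchrodinger_mul (hS : S.Nonempty)
    (hw : ∀ i ∈ S, ∀ j ∈ N i, 0 ≤ w i j) (hf : f ∈ dirichletSubspace 𝕜 S N)
    (hu : u ∈ dirichletSubspace 𝕜 S N) (hupos : ∀ i ∈ S, 0 < u i)
    (hland : ∀ i ∈ S, graphSchrodinger N w W u i = 1) :
    ∃ m ∈ S, 0 ≤ f m * graphSchrodinger N w W f m ∧
      ∀ j ∈ S, |f j| ≤ |graphSchrodinger N w W f m| * u j := by
  obtain ⟨m, hm, habs⟩ : ∃ m ∈ S, ∀ j ∈ S, |f j| ≤ |f m| / u m * u j := by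
    obtain ⟨m, hm, hratio⟩ := S.exists_max_image (fun j => |f j| / u j) hS
    exact ⟨m, hm, fun j hj => (div_le_iff₀ (hupos j hj)).1 (hratio j hj)⟩
  refine ⟨m, hm, ?_⟩
  wlog hfm : 0 ≤ f m generalizing f
  · simpa using this (neg_mem hf) (by simpa using habs) (by simpa using (not_le.1 hfm).le)
  rw [abs_of_nonneg hfm] at habs
  have hdiv : f m / u m ≤ graphSchrodinger N w W f m :=
    div_le_graphSchrodinger_of_forall_le_div_mul hw hf hu hm (hupos m hm).ne' (hland m hm)
      fun j hj => (le_abs_self _).trans (habs j hj)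
  have hnonneg : 0 ≤ graphSchrodinger N w W f m := (div_nonneg hfm (hupos m hm).le).trans hdiv
  refine ⟨mul_nonneg hfm hnonneg, fun j hj => (habs j hj).trans ?_⟩
  rw [abs_of_nonneg hnonneg]
  exact mul_le_mul_of_nonneg_right hdiv (hupos j hj).le

theorem discrete_landscape_inequality_general (hS : S.Nonempty)
    (hw : ∀ i ∈ S, ∀ j ∈ N i, 0 ≤ w i j) (hW : ∀ i ∈ S, 0 ≤ W i)
    (hψ : ψ ∈ dirichletSubspace 𝕜 S N) {lam : 𝕜}
    (heig : ∀ i ∈ S, graphSchrodinger N w W ψ i = lam * ψ i) (hψne : ∃ i ∈ S, ψ i ≠ 0)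
    (hu : u ∈ dirichletSubspace 𝕜 S N) (hland : ∀ i ∈ S, graphSchrodinger N w W u i = 1) :
    ∀ j ∈ S, |ψ j| / S.sup' hS (fun k => |ψ k|) ≤ lam * u j := by
  have hupos : ∀ i ∈ S, 0 < u i := pos_of_graphSchrodinger_pos hw hW hu
    fun i hi => zero_lt_one.trans_eq (hland i hi).symm
  obtain ⟨m, hm, hsign, hbound⟩ := exists_abs_le_abs_graphSchrodinger_mul hS hw hψ hu hupos hland
  rw [heig m hm] at hsign hbound
  have hψm : ψ m ≠ 0 := by
    intro hzero
    obtain ⟨i, hi, hne⟩ := hψne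
    exact hne (by simpa [hzero] using hbound i hi)
  rw [mul_left_comm] at hsign
  have hlam : 0 ≤ lam := nonneg_of_mul_nonneg_left hsign (mul_self_pos.2 hψm)
  have hmax : |ψ m| ≤ S.sup' hS fun k => |ψ k| := S.le_sup' (fun k => |ψ k|) hm
  intro j hj
  rw [div_le_iff₀ ((abs_pos.2 hψm).trans_le hmax)]
  calc |ψ j| ≤ |lam * ψ m| * u j := hbound j hj
    _ = lam * u j * |ψ m| := by rw [abs_mul, abs_of_nonneg hlam]; ring
    _ ≤ lam * u j * S.sup' hS fun k => |ψ k| :=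
      mul_le_mul_of_nonneg_left hmax (mul_nonneg hlam (hupos j hj).le)

end OrderedField

theorem exists_mem_Icc_ne_zero {M : Type*} [Zero M] {L : ℕ} {f : ℕ → M} (h0 : f 0 = 0)
    (hL : f (L + 1) = 0) (hne : ∃ j ∈ Finset.Icc 0 (L + 1), f j ≠ 0) :
    ∃ j ∈ Finset.Icc 1 L, f j ≠ 0 := by
  obtain ⟨j, hj, hfj⟩ := hne
  have hj0 : j ≠ 0 := fun h => hfj (h ▸ h0)
  have hjL : j ≠ L + 1 := fun h => hfj (h ▸ hL)
  rw [Finset.mem_Icc] at hj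
  exact ⟨j, Finset.mem_Icc.2 (by omega), hfj⟩

/-- First control inequality in the discrete case: if `(λ, ψ)` is a Dirichlet
eigenpair of `-tΔ_D + W` with `ψ` not identically zero and `u` is the landscape
function (the Dirichlet solution of `(-tΔ_D + W)u = 1`), then
`|ψⱼ| / max_k |ψ_k| ≤ λ uⱼ` at every interior site. -/
theorem discrete_landscape_inequality
    (L : ℕ) (hL : 1 ≤ L) (t : ℝ) (ht : 0 < t) (W ψ u : ℕ → ℝ) (lam : ℝ)
    (hW : ∀ i ∈ Finset.Icc 1 L, 0 ≤ W i)
    (hψ0 : ψ 0 = 0) (hψL : ψ (L + 1) = 0)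
    (heig : ∀ j ∈ Finset.Icc 1 L,
      -t * (ψ (j + 1) + ψ (j - 1) - 2 * ψ j) + W j * ψ j = lam * ψ j)
    (hψne : ∃ j ∈ Finset.Icc 0 (L + 1), ψ j ≠ 0)
    (hu0 : u 0 = 0) (huL : u (L + 1) = 0)
    (hland : ∀ j ∈ Finset.Icc 1 L,
      -t * (u (j + 1) + u (j - 1) - 2 * u j) + W j * u j = 1) :
    ∀ j ∈ Finset.Icc 1 L,
      |ψ j| / (Finset.Icc 1 L).sup' (Finset.nonempty_Icc.mpr hL)
          (fun k => |ψ k|) ≤ lam * u j := by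
  simp only [← graphSchrodinger_pathNeighbors_apply] at heig hland
  exact discrete_landscape_inequality_general (Finset.nonempty_Icc.2 hL) (fun _ _ _ _ => ht.le) hW
    (mem_dirichletSubspace_Icc hψ0 hψL) heig (exists_mem_Icc_ne_zero hψ0 hψL hψne)
    (mem_dirichletSubspace_Icc hu0 huL) hland
end

section
/- Let L ≥ 1 be a natural number, t > 0 a real number, V : {1,…,L} → ℝ, and λ ∈ ℝ. Let ψ : {0,1,…,L+1} → ℝ satisfy ψ_0 = ψ_{L+1} = 0 and -t(ψ_{j+1} + ψ_{j-1}) + V_j ψ_j = λ ψ_j for every j = 1,…,L, with ψ not identically zero, and define the envelope φ_j = (-1)^j ψ_j. Let V_shift ∈ ℝ satisfy V_shift - 2t - V_j ≥ 0 for all j = 1,…,L, and let u* : {0,1,…,L+1} → ℝ satisfy u*_0 = u*_{L+1} = 0 and -t(u*_{j+1} + u*_{j-1} - 2u*_j) + (V_shift - 2t - V_j) u*_j = 1 for every j = 1,…,L. Then for all j = 1,…,L, |φ_j| / max_{1≤k≤L} |φ_k| ≤ (V_shift - λ) u*_j. -/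
/-!
Conjugation by `(-1) ^ j` reverses the sign of the hopping term, so the envelope `φ` satisfies
`H φ = (V_shift - λ) φ` for `H = -tΔ + W*` with `W* ≥ 0`. Such an `H` obeys the positive maximum
principle: `H v ≥ 0` at a nonnegative maximum of `v`. At a maximum of `|φ|` this gives
`λ ≤ V_shift`, so `|H φ| ≤ (V_shift - λ) max |φ|`, and comparison with the multiple
`(V_shift - λ) max |φ| u` of a supersolution `H u ≥ 1` bounds `|φ|`. Since `H u > 0`, subtracting
`ε u` turns weak inequalities into strict ones, and no connectedness of the sites is involved.
-/

section PositiveMaximumPrinciple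

variable {ι K : Type*} [Field K] [LinearOrder K]

/-- The positive maximum principle for a linear operator `H` at the interior sites `s` of a region
`T`, as satisfied by Schrödinger operators with nonnegative hopping and potential. It is stated
for the positive operator (`-Δ`, not `Δ`); the boundary sites are those of `T \ s`. -/
def PositiveMaximumPrinciple (H : (ι → K) →ₗ[K] (ι → K)) (s T : Finset ι) : Prop :=
  ∀ v : ι → K, ∀ i ∈ s, 0 ≤ v i → (∀ j ∈ T, v j ≤ v i) → 0 ≤ H v i

namespace PositiveMaximumPrinciple

variable {H : (ι → K) →ₗ[K] (ι → K)} {s T : Finset ι} {u v φ : ι → K} {C E : K}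

theorem exists_pos_and_map_nonneg (hH : PositiveMaximumPrinciple H s T)
    (hv_bdry : ∀ j ∈ T, j ∉ s → v j ≤ 0) (hv_pos : ∃ j ∈ T, 0 < v j) :
    ∃ k ∈ s, 0 < v k ∧ 0 ≤ H v k := by
  obtain ⟨j, hj, hvj⟩ := hv_pos
  obtain ⟨k, hk, hmax⟩ := T.exists_max_image v ⟨j, hj⟩
  have hvk : 0 < v k := hvj.trans_le (hmax j hj)
  have hks : k ∈ s := by
    by_contra hks
    exact hvk.not_ge (hv_bdry k hk hks)
  exact ⟨k, hks, hvk, hH v k hks hvk.le hmax⟩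

variable [IsStrictOrderedRing K]

theorem nonpos_of_map_nonpos (hH : PositiveMaximumPrinciple H s T)
    (hu : ∀ i ∈ s, 0 < H u i) (hu_bdry : ∀ j ∈ T, j ∉ s → 0 ≤ u j)
    (hv : ∀ i ∈ s, H v i ≤ 0) (hv_bdry : ∀ j ∈ T, j ∉ s → v j ≤ 0) :
    ∀ j ∈ T, v j ≤ 0 := by
  by_contra! ⟨j, hj, hvj⟩
  obtain ⟨ε, hε, hεj⟩ := exists_pos_mul_lt hvj (u j)
  obtain ⟨k, hk, -, hHk⟩ := hH.exists_pos_and_map_nonneg (v := v - ε • u)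
    (fun i hi his => by
      simpa using (hv_bdry i hi his).trans (mul_nonneg hε.le (hu_bdry i hi his)))
    ⟨j, hj, by simpa [mul_comm] using hεj⟩
  have hHk_neg : H (v - ε • u) k < 0 := by
    simpa using (hv k hk).trans_lt (mul_pos hε (hu k hk))
  exact hHk.not_gt hHk_neg

theorem le_mul_of_map_le (hH : PositiveMaximumPrinciple H s T) (hC : 0 ≤ C)
    (hu : ∀ i ∈ s, 1 ≤ H u i) (hu_bdry : ∀ j ∈ T, j ∉ s → 0 ≤ u j)
    (hv : ∀ i ∈ s, H v i ≤ C) (hv_bdry : ∀ j ∈ T, j ∉ s → v j ≤ 0) :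
    ∀ j ∈ T, v j ≤ C * u j := by
  have hsub : ∀ j ∈ T, (v - C • u) j ≤ 0 :=
    hH.nonpos_of_map_nonpos (fun i hi => zero_lt_one.trans_le (hu i hi)) hu_bdry
      (fun i hi => by simpa using (hv i hi).trans (le_mul_of_one_le_right hC (hu i hi)))
      (fun j hj hjs => by
        simpa using (hv_bdry j hj hjs).trans (mul_nonneg hC (hu_bdry j hj hjs)))
  simpa using hsub

theorem abs_le_mul_of_abs_map_le (hH : PositiveMaximumPrinciple H s T) (hC : 0 ≤ C)
    (hu : ∀ i ∈ s, 1 ≤ H u i) (hu_bdry : ∀ j ∈ T, j ∉ s → 0 ≤ u j)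
    (hv : ∀ i ∈ s, |H v i| ≤ C) (hv_bdry : ∀ j ∈ T, j ∉ s → v j = 0) :
    ∀ j ∈ T, |v j| ≤ C * u j := by
  intro j hj
  have hle : v j ≤ C * u j :=
    hH.le_mul_of_map_le hC hu hu_bdry (fun i hi => (abs_le'.mp (hv i hi)).1)
      (fun i hi his => (hv_bdry i hi his).le) j hj
  have hneg_le : (-v) j ≤ C * u j :=
    hH.le_mul_of_map_le hC hu hu_bdry (fun i hi => by simpa using (abs_le'.mp (hv i hi)).2)
      (fun i hi his => by simp [hv_bdry i hi his]) j hj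
  exact abs_le'.mpr ⟨hle, hneg_le⟩

theorem eigenvalue_nonneg (hH : PositiveMaximumPrinciple H s T)
    (hφ : ∀ i ∈ s, H φ i = E * φ i) (hφ_bdry : ∀ j ∈ T, j ∉ s → φ j = 0)
    (hφ_ne : ∃ j ∈ T, φ j ≠ 0) : 0 ≤ E := by
  obtain ⟨j, hj, hφj⟩ := hφ_ne
  wlog hpos : 0 < φ j generalizing φ
  · exact this (φ := -φ) (fun i hi => by simp [hφ i hi])
      (fun i hi his => by simp [hφ_bdry i hi his])
      (by simpa using hφj) (by simpa using lt_of_le_of_ne (not_lt.mp hpos) hφj)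
  obtain ⟨k, hk, hφk, hHk⟩ :=
    hH.exists_pos_and_map_nonneg (fun i hi his => (hφ_bdry i hi his).le) ⟨j, hj, hpos⟩
  exact nonneg_of_mul_nonneg_left (hφ k hk ▸ hHk) hφk

theorem landscape_inequality (hH : PositiveMaximumPrinciple H s T) (hsT : s ⊆ T) (hs : s.Nonempty)
    (hu : ∀ i ∈ s, 1 ≤ H u i) (hu_bdry : ∀ j ∈ T, j ∉ s → 0 ≤ u j)
    (hφ : ∀ i ∈ s, H φ i = E * φ i) (hφ_bdry : ∀ j ∈ T, j ∉ s → φ j = 0)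
    (hφ_ne : ∃ j ∈ T, φ j ≠ 0) :
    ∀ j ∈ s, |φ j| / s.sup' hs (fun k => |φ k|) ≤ E * u j := by
  set M := s.sup' hs (fun k => |φ k|)
  have hφ_le : ∀ i ∈ s, |φ i| ≤ M := fun i hi => s.le_sup' (fun k => |φ k|) hi
  have hM : 0 < M := by
    obtain ⟨j, hj, hφj⟩ := hφ_ne
    have hjs : j ∈ s := by
      by_contra hjs
      exact hφj (hφ_bdry j hj hjs)
    exact (abs_pos.mpr hφj).trans_le (hφ_le j hjs)
  have hE : 0 ≤ E := hH.eigenvalue_nonneg hφ hφ_bdry hφ_ne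
  have hHφ : ∀ i ∈ s, |H φ i| ≤ E * M := fun i hi => by
    rw [hφ i hi, abs_mul, abs_of_nonneg hE]
    exact mul_le_mul_of_nonneg_left (hφ_le i hi) hE
  intro j hj
  rw [div_le_iff₀ hM, mul_right_comm]
  exact hH.abs_le_mul_of_abs_map_le (mul_nonneg hE hM.le) hu hu_bdry hHφ hφ_bdry j (hsT hj)

end PositiveMaximumPrinciple

end PositiveMaximumPrinciple

section DiscreteSchrodinger

variable {K : Type*} [Field K]

/-- The one-dimensional discrete Schrödinger operator `-tΔ + W`, with `Δ` the second difference,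
acting on sequences. Only its values at sites `j ≥ 1` are meaningful: at `0` the left neighbour
`0 - 1` is truncated to `0`. -/
def discreteSchrodinger (t : K) (W : ℕ → K) : (ℕ → K) →ₗ[K] (ℕ → K) where
  toFun v j := -t * (v (j + 1) + v (j - 1) - 2 * v j) + W j * v j
  map_add' v w := by
    ext j
    simp only [Pi.add_apply]
    ring
  map_smul' c v := by
    ext j
    simp only [Pi.smul_apply, smul_eq_mul, RingHom.id_apply]
    ring

theorem discreteSchrodinger_apply (t : K) (W v : ℕ → K) (j : ℕ) :
    discreteSchrodinger t W v j = -t * (v (j + 1) + v (j - 1) - 2 * v j) + W j * v j :=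
  rfl

theorem discreteSchrodinger_envelope (t c : K) (V ψ : ℕ → K) {j : ℕ} (hj : 1 ≤ j) :
    discreteSchrodinger t (fun i => c - 2 * t - V i) (fun i => (-1) ^ i * ψ i) j =
      (-1) ^ j * (c * ψ j - (-t * (ψ (j + 1) + ψ (j - 1)) + V j * ψ j)) := by
  obtain ⟨m, rfl⟩ := Nat.exists_eq_add_of_le' hj
  simp only [discreteSchrodinger_apply, Nat.add_sub_cancel, pow_succ]
  ring

variable [LinearOrder K] [IsStrictOrderedRing K]

theorem positiveMaximumPrinciple_discreteSchrodinger {L : ℕ} {t : K} {W : ℕ → K} (ht : 0 ≤ t)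
    (hW : ∀ j ∈ Finset.Icc 1 L, 0 ≤ W j) :
    PositiveMaximumPrinciple (discreteSchrodinger t W) (Finset.Icc 1 L)
      (Finset.Icc 0 (L + 1)) := by
  intro v i hi hvi hmax
  obtain ⟨hi1, hiL⟩ := Finset.mem_Icc.mp hi
  have hright : v (i + 1) ≤ v i := hmax _ (Finset.mem_Icc.mpr (by omega))
  have hleft : v (i - 1) ≤ v i := hmax _ (Finset.mem_Icc.mpr (by omega))
  have hlap : v (i + 1) + v (i - 1) - 2 * v i ≤ 0 := by linarith
  exact add_nonneg (mul_nonneg_of_nonpos_of_nonpos (neg_nonpos.mpr ht) hlap)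
    (mul_nonneg (hW i hi) hvi)

theorem dual_landscape_inequality_general
    (L : ℕ) (hL : 1 ≤ L) (t : K) (ht : 0 ≤ t) (V : ℕ → K) (lam : K)
    (ψ φ u : ℕ → K)
    (hψ0 : ψ 0 = 0) (hψL : ψ (L + 1) = 0)
    (heig : ∀ j ∈ Finset.Icc 1 L,
      -t * (ψ (j + 1) + ψ (j - 1)) + V j * ψ j = lam * ψ j)
    (hψne : ∃ j ∈ Finset.Icc 0 (L + 1), ψ j ≠ 0)
    (hφ : ∀ j, φ j = (-1 : K) ^ j * ψ j)
    (Vshift : K) (hVs : ∀ j ∈ Finset.Icc 1 L, 0 ≤ Vshift - 2 * t - V j)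
    (hu0 : 0 ≤ u 0) (huL : 0 ≤ u (L + 1))
    (hu : ∀ j ∈ Finset.Icc 1 L,
      1 ≤ -t * (u (j + 1) + u (j - 1) - 2 * u j) + (Vshift - 2 * t - V j) * u j) :
    ∀ j ∈ Finset.Icc 1 L,
      |φ j| / (Finset.Icc 1 L).sup' (Finset.nonempty_Icc.mpr hL)
          (fun k => |φ k|) ≤ (Vshift - lam) * u j := by
  obtain rfl : φ = fun j => (-1) ^ j * ψ j := funext hφ
  have hbdry : ∀ j ∈ Finset.Icc 0 (L + 1), j ∉ Finset.Icc 1 L → j = 0 ∨ j = L + 1 := by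
    intro j
    simp only [Finset.mem_Icc]
    omega
  refine (positiveMaximumPrinciple_discreteSchrodinger ht hVs).landscape_inequality
    (Finset.Icc_subset_Icc zero_le_one L.le_succ) _ hu ?_ ?_ ?_ ?_
  · intro j hj hjs
    obtain rfl | rfl := hbdry j hj hjs <;> assumption
  · intro j hj
    rw [discreteSchrodinger_envelope t Vshift V ψ (Finset.mem_Icc.mp hj).1, heig j hj]
    ring
  · intro j hj hjs
    obtain rfl | rfl := hbdry j hj hjs <;> simp only [hψ0, hψL, mul_zero]
  · simpa using hψne

end DiscreteSchrodinger

/-- First control inequality for the dual landscape: if `ψ` is a nontrivial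
Dirichlet eigenfunction of `-t(ψ_{j+1} + ψ_{j-1}) + Vⱼψⱼ = λψⱼ`, `φⱼ = (-1)ʲψⱼ`
is its envelope, `V_shift` satisfies `V_shift - 2t - V ≥ 0`, and `u*` is the
dual landscape function, the Dirichlet solution of
`(-tΔ_D + (V_shift - 2t - V))u* = 1`, then
`|φⱼ| / max_k |φ_k| ≤ (V_shift - λ) u*ⱼ` at every interior site. -/
theorem dual_landscape_inequality
    (L : ℕ) (hL : 1 ≤ L) (t : ℝ) (ht : 0 < t) (V : ℕ → ℝ) (lam : ℝ)
    (ψ φ ustar : ℕ → ℝ)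
    (hψ0 : ψ 0 = 0) (hψL : ψ (L + 1) = 0)
    (heig : ∀ j ∈ Finset.Icc 1 L,
      -t * (ψ (j + 1) + ψ (j - 1)) + V j * ψ j = lam * ψ j)
    (hψne : ∃ j ∈ Finset.Icc 0 (L + 1), ψ j ≠ 0)
    (hφ : ∀ j, φ j = (-1 : ℝ) ^ j * ψ j)
    (Vshift : ℝ) (hVs : ∀ j ∈ Finset.Icc 1 L, 0 ≤ Vshift - 2 * t - V j)
    (hu0 : ustar 0 = 0) (huL : ustar (L + 1) = 0)
    (hland : ∀ j ∈ Finset.Icc 1 L,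
      -t * (ustar (j + 1) + ustar (j - 1) - 2 * ustar j)
        + (Vshift - 2 * t - V j) * ustar j = 1) :
    ∀ j ∈ Finset.Icc 1 L,
      |φ j| / (Finset.Icc 1 L).sup' (Finset.nonempty_Icc.mpr hL)
          (fun k => |φ k|) ≤ (Vshift - lam) * ustar j :=
  dual_landscape_inequality_general L hL t ht.le V lam ψ φ ustar hψ0 hψL heig hψne hφ
    Vshift hVs hu0.ge huL.ge fun j hj => (hland j hj).ge
end

section
/- Let L ≥ 1 be a natural number, t > 0 a real number, and W : {1,…,L} → ℝ with W_i ≥ 0 for all i. Let A be the L×L tridiagonal matrix with A_{ii} = 2t + W_i, A_{i,i-1} = A_{i-1,i} = -t, and all other entries zero. If f : {1,…,L} → ℝ satisfies f_k ≥ 0 for all k and f_{k_0} > 0 for some k_0, then the solution v = A⁻¹ f satisfies v_j > 0 for all j = 1,…,L. -/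
open Matrix

/-!
The matrix of `-tΔ_D + W` is an irreducibly diagonally dominant Z-matrix, and for such a matrix
`A` the strong minimum principle holds. If `A v ≥ 0` and `v` has a nonpositive minimum at `p`, then
`(A v)_p = (∑ j, A_pj) v_p + ∑ j, A_pj (v_j - v_p)` has only nonpositive terms, so all of them
vanish. Hence `v` takes its minimum at every neighbour of `p`, by irreducibility everywhere, and a
row with positive sum forces that minimum to be zero.
-/

section RowIdentity

variable {ι R : Type*} [Fintype ι]

theorem mulVec_apply_eq_sum_mul_add_sum_mul_sub [NonUnitalNonAssocRing R] (A : Matrix ι ι R)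
    (v : ι → R) (i : ι) :
    (A *ᵥ v) i = (∑ j, A i j) * v i + ∑ j, A i j * (v j - v i) := by
  simp only [mulVec, dotProduct, mul_sub, Finset.sum_sub_distrib, Finset.sum_mul,
    add_sub_cancel]

theorem row_terms_eq_zero_of_nonpos_min [Ring R] [PartialOrder R] [IsOrderedRing R]
    {A : Matrix ι ι R} {v : ι → R} {i : ι} (hoff : ∀ j, i ≠ j → A i j ≤ 0)
    (hsum : 0 ≤ ∑ j, A i j) (hAv : 0 ≤ (A *ᵥ v) i) (hvi : v i ≤ 0) (hmin : ∀ j, v i ≤ v j) :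
    (∑ j, A i j) * v i = 0 ∧ ∀ j, A i j * (v j - v i) = 0 := by
  have hdiag : (∑ j, A i j) * v i ≤ 0 := mul_nonpos_of_nonneg_of_nonpos hsum hvi
  have hterm (j : ι) : A i j * (v j - v i) ≤ 0 := by
    obtain rfl | hij := eq_or_ne i j
    · rw [sub_self, mul_zero]
    · exact mul_nonpos_of_nonpos_of_nonneg (hoff j hij) (sub_nonneg.2 (hmin j))
  have hterms : ∑ j, A i j * (v j - v i) ≤ 0 := Finset.sum_nonpos fun j _ => hterm j
  rw [mulVec_apply_eq_sum_mul_add_sum_mul_sub] at hAv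
  have hterms_zero : ∑ j, A i j * (v j - v i) = 0 := eq_zero_of_add_nonneg_right hdiag hterms hAv
  exact ⟨eq_zero_of_add_nonneg_left hdiag hterms hAv, fun j =>
    (Finset.sum_eq_zero_iff_of_nonpos fun j _ => hterm j).1 hterms_zero j (Finset.mem_univ j)⟩

end RowIdentity

/-- An irreducibly diagonally dominant Z-matrix: the off-diagonal entries are nonpositive, which
makes weak diagonal dominance the nonnegativity of the row sums; dominance is strict in some row,
and the directed graph of negative entries is strongly connected. -/
structure IsIrreduciblyDominantZMatrix {ι R : Type*} [Fintype ι] [AddCommMonoid R] [Preorder R]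
    (A : Matrix ι ι R) : Prop where
  offDiag_nonpos : ∀ i j, i ≠ j → A i j ≤ 0
  rowSum_nonneg : ∀ i, 0 ≤ ∑ j, A i j
  exists_rowSum_pos : ∃ i, 0 < ∑ j, A i j
  connected : ∀ i j, Relation.ReflTransGen (fun k l => A k l < 0) i j

namespace IsIrreduciblyDominantZMatrix

variable {ι R : Type*} [Fintype ι]

section Ring

variable [CommRing R] [LinearOrder R] [IsStrictOrderedRing R] {A : Matrix ι ι R}

theorem eq_zero_of_mulVec_nonneg (hA : IsIrreduciblyDominantZMatrix A) {v : ι → R}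
    (hAv : 0 ≤ A *ᵥ v) {i : ι} (hvi : v i ≤ 0) : v = 0 := by
  have : Nonempty ι := ⟨i⟩
  obtain ⟨p, hp⟩ := Finite.exists_min v
  have row_terms {k : ι} (hk : v k = v p) :
      (∑ j, A k j) * v k = 0 ∧ ∀ j, A k j * (v j - v k) = 0 :=
    row_terms_eq_zero_of_nonpos_min (hA.offDiag_nonpos k) (hA.rowSum_nonneg k) (hAv k)
      (hk.trans_le ((hp i).trans hvi)) fun j => hk.trans_le (hp j)
  have hconst (k : ι) : v k = v p := by
    induction hA.connected p k with
    | refl => rfl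
    | tail _ hneg ih =>
      exact (sub_eq_zero.1 ((mul_eq_zero.1 ((row_terms ih).2 _)).resolve_left hneg.ne)).trans ih
  obtain ⟨r, hr⟩ := hA.exists_rowSum_pos
  have hvr : v r = 0 := (mul_eq_zero.1 (row_terms (hconst r)).1).resolve_left hr.ne'
  ext k
  exact (hconst k).trans ((hconst r).symm.trans hvr)

theorem pos_of_mulVec_nonneg (hA : IsIrreduciblyDominantZMatrix A) {v : ι → R}
    (hAv : 0 ≤ A *ᵥ v) (hAv_ne : A *ᵥ v ≠ 0) (i : ι) : 0 < v i := by
  by_contra! hvi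
  exact hAv_ne (by rw [hA.eq_zero_of_mulVec_nonneg hAv hvi, mulVec_zero])

theorem det_ne_zero [DecidableEq ι] (hA : IsIrreduciblyDominantZMatrix A) : A.det ≠ 0 := by
  intro hdet
  obtain ⟨v, hv, hAv⟩ := exists_mulVec_eq_zero_iff.2 hdet
  obtain ⟨i, -⟩ := hA.exists_rowSum_pos
  obtain hvi | hvi := le_total (v i) 0
  · exact hv (hA.eq_zero_of_mulVec_nonneg hAv.ge hvi)
  · have hAneg : A *ᵥ -v = 0 := by rw [mulVec_neg, hAv, neg_zero]
    exact hv (neg_eq_zero.1 (hA.eq_zero_of_mulVec_nonneg hAneg.ge (neg_nonpos.2 hvi)))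

end Ring

theorem inv_mulVec_pos [DecidableEq ι] [Field R] [LinearOrder R] [IsStrictOrderedRing R]
    {A : Matrix ι ι R} (hA : IsIrreduciblyDominantZMatrix A) {f : ι → R} (hf : 0 ≤ f)
    (hf_ne : f ≠ 0) (i : ι) : 0 < (A⁻¹ *ᵥ f) i := by
  have hsol : A *ᵥ (A⁻¹ *ᵥ f) = f := by
    rw [mulVec_mulVec, mul_nonsing_inv A hA.det_ne_zero.isUnit, one_mulVec]
  exact hA.pos_of_mulVec_nonneg (hf.trans_eq hsol.symm) (hsol.trans_ne hf_ne) i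

end IsIrreduciblyDominantZMatrix

section Graph

open SimpleGraph

theorem sum_diagonal_sub_smul_adjMatrix {V R : Type*} [Fintype V] [DecidableEq V] [Ring R]
    (G : SimpleGraph V) [DecidableRel G.Adj] (c : V → R) (t : R) (i : V) :
    ∑ j, (diagonal c - t • G.adjMatrix R) i j = c i - t * G.degree i := by
  have hdegree : ∑ j, G.adjMatrix R i j = G.degree i := by
    simpa only [mulVec, dotProduct, Function.const_apply, mul_one] using
      G.adjMatrix_mulVec_const_apply (a := (1 : R)) (v := i)
  simp only [Matrix.sub_apply, Matrix.smul_apply, smul_eq_mul, diagonal_apply,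
    Finset.sum_sub_distrib, Finset.sum_ite_eq, Finset.mem_univ, if_true, ← Finset.mul_sum, hdegree]

theorem isIrreduciblyDominantZMatrix_diagonal_sub_smul_adjMatrix {V R : Type*} [Fintype V]
    [DecidableEq V] [Ring R] [PartialOrder R] [IsStrictOrderedRing R] {G : SimpleGraph V}
    [DecidableRel G.Adj] (hG : G.Preconnected) {t : R} (ht : 0 < t) {c : V → R}
    (hc : ∀ i, t * G.degree i ≤ c i) (hc_lt : ∃ i, t * G.degree i < c i) :
    IsIrreduciblyDominantZMatrix (diagonal c - t • G.adjMatrix R) where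
  offDiag_nonpos i j hij := by
    rw [Matrix.sub_apply, diagonal_apply_ne _ hij, Matrix.smul_apply, adjMatrix_apply,
      smul_eq_mul, zero_sub, neg_nonpos]
    split_ifs <;> simp [ht.le]
  rowSum_nonneg i := by
    rw [sum_diagonal_sub_smul_adjMatrix]
    exact sub_nonneg.2 (hc i)
  exists_rowSum_pos := by
    simp_rw [sum_diagonal_sub_smul_adjMatrix, sub_pos]
    exact hc_lt
  connected i j := by
    refine Relation.ReflTransGen.mono (fun k l hkl => ?_) i j
      ((reachable_iff_reflTransGen i j).1 (hG i j))
    simpa [diagonal_apply_ne _ hkl.ne, hkl] using ht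

theorem degree_pathGraph_le_two {n : ℕ} [DecidableRel (pathGraph n).Adj] (i : Fin n) :
    (pathGraph n).degree i ≤ 2 := by
  have hsub : ((pathGraph n).neighborFinset i).map Fin.valEmbedding ⊆
      {(i : ℕ) - 1, (i : ℕ) + 1} := by
    intro k hk
    simp only [Finset.mem_map, mem_neighborFinset, pathGraph_adj, Fin.valEmbedding_apply] at hk
    grind
  calc (pathGraph n).degree i
      = (((pathGraph n).neighborFinset i).map Fin.valEmbedding).card := by
        rw [Finset.card_map, card_neighborFinset_eq_degree]
    _ ≤ 2 := (Finset.card_le_card hsub).trans Finset.card_le_two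

theorem degree_pathGraph_zero_le_one {n : ℕ} [NeZero n] [DecidableRel (pathGraph n).Adj] :
    (pathGraph n).degree 0 ≤ 1 := by
  rw [← card_neighborFinset_eq_degree, Finset.card_le_one]
  simp only [mem_neighborFinset, pathGraph_adj, Fin.ext_iff, Fin.val_zero]
  omega

end Graph

section Schrodinger

open scoped Classical in
/-- The discrete Dirichlet Schrödinger operator `-tΔ_D + W` on a segment of `L` sites. The two
boundary sites also have `2t` on the diagonal: the neighbour they lack carries the value `0`. -/
noncomputable def dirichletSchrodinger {R : Type*} [Ring R] {L : ℕ} (t : R) (W : Fin L → R) :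
    Matrix (Fin L) (Fin L) R :=
  diagonal (fun i => 2 * t + W i) - t • (SimpleGraph.pathGraph L).adjMatrix R

theorem dirichletSchrodinger_apply {R : Type*} [Ring R] {L : ℕ} (t : R) (W : Fin L → R)
    (i j : Fin L) :
    dirichletSchrodinger t W i j =
      if (i : ℕ) = (j : ℕ) then 2 * t + W i
      else if (i : ℕ) + 1 = (j : ℕ) ∨ (j : ℕ) + 1 = (i : ℕ) then -t
      else 0 := by
  rw [dirichletSchrodinger, Matrix.sub_apply, Matrix.smul_apply, diagonal_apply,
    SimpleGraph.adjMatrix_apply]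
  simp only [Fin.ext_iff, SimpleGraph.pathGraph_adj, smul_eq_mul, mul_ite, mul_one, mul_zero]
  split_ifs <;> first | omega | simp

theorem isIrreduciblyDominantZMatrix_dirichletSchrodinger {R : Type*} [Ring R] [PartialOrder R]
    [IsStrictOrderedRing R] {L : ℕ} [NeZero L] {t : R} (ht : 0 < t) {W : Fin L → R}
    (hW : ∀ i, 0 ≤ W i) : IsIrreduciblyDominantZMatrix (dirichletSchrodinger t W) := by
  classical
  refine isIrreduciblyDominantZMatrix_diagonal_sub_smul_adjMatrix
    (SimpleGraph.pathGraph_preconnected L) ht (fun i => ?_) ⟨0, ?_⟩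
  · calc t * (SimpleGraph.pathGraph L).degree i
        ≤ t * 2 := by gcongr; exact_mod_cast degree_pathGraph_le_two i
      _ = 2 * t := by rw [mul_two, two_mul]
      _ ≤ 2 * t + W i := le_add_of_nonneg_right (hW i)
  · calc t * (SimpleGraph.pathGraph L).degree 0
        ≤ t * 1 := by gcongr; exact_mod_cast degree_pathGraph_zero_le_one
      _ = t := mul_one t
      _ < 2 * t := by rw [two_mul]; exact lt_add_of_pos_left t ht
      _ ≤ 2 * t + W 0 := le_add_of_nonneg_right (hW 0)

theorem tridiagonal_schrodinger_solution_pos_general {K : Type*} [Field K] [LinearOrder K]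
    [IsStrictOrderedRing K] {L : ℕ} {t : K} (ht : 0 < t) {W : Fin L → K} (hW : ∀ i, 0 ≤ W i)
    {f : Fin L → K} (hf : ∀ k, 0 ≤ f k) (hf' : ∃ k, 0 < f k) (j : Fin L) :
    0 < ((dirichletSchrodinger t W)⁻¹ *ᵥ f) j := by
  obtain ⟨k, hk⟩ := hf'
  have : NeZero L := ⟨k.pos.ne'⟩
  exact (isIrreduciblyDominantZMatrix_dirichletSchrodinger ht hW).inv_mulVec_pos hf
    (Function.ne_iff.2 ⟨k, hk.ne'⟩) j

end Schrodinger

/-- If `f ≥ 0` is not identically zero, the Dirichlet solution `v = A⁻¹ f` of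
the discrete Schrödinger equation `(-tΔ_D + W)v = f` is strictly positive at
every interior site. -/
theorem tridiagonal_schrodinger_solution_pos
    (L : ℕ) (hL : 1 ≤ L) (t : ℝ) (ht : 0 < t) (W : Fin L → ℝ)
    (hW : ∀ i, 0 ≤ W i)
    (A : Matrix (Fin L) (Fin L) ℝ)
    (hA : ∀ i j : Fin L, A i j =
      if (i : ℕ) = (j : ℕ) then 2 * t + W i
      else if (i : ℕ) + 1 = (j : ℕ) ∨ (j : ℕ) + 1 = (i : ℕ) then -t
      else 0)
    (f : Fin L → ℝ) (hf : ∀ k, 0 ≤ f k) (hf' : ∃ k₀, 0 < f k₀) :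
    ∀ j, 0 < (A⁻¹ *ᵥ f) j := by
  obtain rfl : A = dirichletSchrodinger t W := by ext; rw [hA, dirichletSchrodinger_apply]
  exact tridiagonal_schrodinger_solution_pos_general ht hW hf hf'
end
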